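/- Let m = 2^s with s an integer, s ≥ 2. Then every matrix A ∈ ℝ^{m×2} satisfies β_A > (1 − 1/(m·sin(π/(2m))))^{−1/2}; in particular min{β_A : A ∈ ℝ^{m×2}} > (1 − 1/(m·sin(π/(2m))))^{−1/2}. -/

import Mathlib

noncomputable section

open Real
open scoped RealInnerProductSpace ENNReal

/-- ℝ² as a Euclidean space. -/
abbrev E2 : Type := EuclideanSpace ℝ (Fin 2)

/-- The vector `(x, y)` in ℝ². -/
def vec2 (x y : ℝ) : E2 := (WithLp.equiv 2 (Fin 2 → ℝ)).symm ![x, y]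

/-- The coordinates of a vector in ℝ². -/
def toFun2 (v : E2) : Fin 2 → ℝ := WithLp.equiv 2 (Fin 2 → ℝ) v

/-- The phaseless measurement map `Φ_A(x) = (|⟨a_j, x⟩|)_j`. -/
def PhiMap {m : ℕ} (a : Fin m → E2) (x : E2) : EuclideanSpace ℝ (Fin m) :=
  (WithLp.equiv 2 (Fin m → ℝ)).symm fun j => |⟪a j, x⟫|

/-- The distance `dist(x,y) = min ‖x − y‖ ‖x + y‖` (real phase retrieval distance). -/
def pdist (x y : E2) : ℝ := min ‖x - y‖ ‖x + y‖

/-- The set of Lipschitz ratios of the phaseless measurement map. -/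
def ratioSet {m : ℕ} (a : Fin m → E2) : Set ℝ :=
  {r | ∃ x y : E2, pdist x y ≠ 0 ∧ r = ‖PhiMap a x - PhiMap a y‖ / pdist x y}

/-- The optimal lower Lipschitz constant `L_A`. -/
def lipL {m : ℕ} (a : Fin m → E2) : ℝ := sInf (ratioSet a)

/-- The optimal upper Lipschitz constant `U_A`. -/
def lipU {m : ℕ} (a : Fin m → E2) : ℝ := sSup (ratioSet a)

/-- The condition number `β_A = U_A / L_A`, with `β_A = +∞` when `L_A = 0`. -/
def condNum {m : ℕ} (a : Fin m → E2) : ℝ≥0∞ :=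
  if lipL a = 0 then ⊤ else ENNReal.ofReal (lipU a / lipL a)

/-- An edge family: nonzero vectors with pairwise distinct directions summing to zero
(the edge vectors of a strictly convex polygon). -/
def IsEdgeFamily {m : ℕ} (e : Fin m → E2) : Prop :=
  (∀ j, e j ≠ 0) ∧
  (∀ i j : Fin m, i ≠ j → ‖e i‖⁻¹ • e i ≠ ‖e j‖⁻¹ • e j) ∧
  ∑ j, e j = 0

/-- The diameter-to-perimeter ratio of the polygon with edge vectors `e`. -/
def rRatio {m : ℕ} (e : Fin m → E2) : ℝ :=
  sSup {s | ∃ u : E2, ‖u‖ = 1 ∧ s = ∑ j, |⟪e j, u⟫|} / (2 * ∑ j, ‖e j‖)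

/-- An optimal edge family: minimizes `rRatio` among all edge families of size `m`. -/
def IsOptimalEdgeFamily {m : ℕ} (e : Fin m → E2) : Prop :=
  IsEdgeFamily e ∧ ∀ e' : Fin m → E2, IsEdgeFamily e' → rRatio e ≤ rRatio e'

/-- The complex square map on ℝ² ≅ ℂ: `f(t·(cos φ, sin φ)) = t²·(cos 2φ, sin 2φ)`. -/
def csq (v : E2) : E2 :=
  vec2 (toFun2 v 0 ^ 2 - toFun2 v 1 ^ 2) (2 * toFun2 v 0 * toFun2 v 1)

/-- The harmonic frame `E_m`: the `j`-th row is `(cos((j−1)π/m), sin((j−1)π/m))`, `j = 1,…,m`. -/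
def harmonicFrame (m : ℕ) : Fin m → E2 :=
  fun j => vec2 (Real.cos ((j : ℕ) * π / m)) (Real.sin ((j : ℕ) * π / m))


/-- A signed sum of powers `ω^k`, `k < 2^s`, of a primitive `2^(s+1)`-th root does not vanish. -/
lemma aux_cyclo {s : ℕ} {ω : ℂ} (hω : IsPrimitiveRoot ω (2 ^ (s + 1))) (σ : ℕ → ℤ)
    (hσ : σ 0 ≠ 0) : ∑ k ∈ Finset.range (2 ^ s), (σ k : ℂ) * ω ^ k ≠ 0 := by
  intro h
  let p : Polynomial ℤ := ∑ k ∈ Finset.range (2 ^ s), Polynomial.C (σ k) * Polynomial.X ^ k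
  have hp0 : p.coeff 0 = σ 0 := by
    simp [p, Polynomial.finsetSum_coeff, Polynomial.coeff_X_pow]
  have hp : p ≠ 0 := by
    intro h0
    rw [h0] at hp0
    exact hσ (by simpa using hp0.symm)
  have hroot : Polynomial.aeval ω p = 0 := by
    simpa [p] using h
  have hdvd := minpoly.isIntegrallyClosed_dvd (hω.isIntegral (by positivity)) hroot
  rw [← Polynomial.cyclotomic_eq_minpoly hω (by positivity)] at hdvd
  have hdeg := Polynomial.natDegree_le_of_dvd hdvd hp
  rw [Polynomial.natDegree_cyclotomic, Nat.totient_prime_pow_succ Nat.prime_two] at hdeg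
  have hlt : p.natDegree < 2 ^ s := by
    by_contra hc
    push Not at hc
    have : p.coeff p.natDegree = 0 := by
      simp only [p, Polynomial.finsetSum_coeff, Polynomial.coeff_C_mul, Polynomial.coeff_X_pow]
      apply Finset.sum_eq_zero
      intro k hk
      rw [Finset.mem_range] at hk
      rw [if_neg (by change p.natDegree ≠ k; omega)]
      simp
    exact hp (Polynomial.leadingCoeff_eq_zero.mp this)
  simp at hdeg
  omega

lemma aux_norm_exp (a b : ℝ) (h1 : a ≤ b) (h2 : b ≤ a + π) :
    ‖Complex.exp (a * Complex.I) - Complex.exp (b * Complex.I)‖ = 2 * Real.sin ((b - a) / 2) := by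
  have : Complex.exp (a * Complex.I) - Complex.exp (b * Complex.I)
      = - (Complex.exp (a * Complex.I) * (Complex.exp (Complex.I * ((b - a : ℝ) : ℂ)) - 1)) := by
    rw [mul_sub, ← Complex.exp_add]
    push_cast
    ring_nf
  rw [this, norm_neg, norm_mul, Complex.norm_exp_ofReal_mul_I, Complex.norm_exp_I_mul_ofReal_sub_one,
    one_mul, Real.norm_eq_abs, abs_of_nonneg]
  have := Real.sin_nonneg_of_nonneg_of_le_pi (x := (b - a) / 2) (by linarith) (by linarith [Real.pi_pos])
  linarith

lemma aux_inner_eq {a b : ℂ} {M : ℝ} (ha : ‖a‖ ≤ M)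
    (h : M * ‖b‖ ≤ (a * (starRingEnd ℂ) b).re) : (‖b‖ : ℂ) * a = M * b := by
  have hM : 0 ≤ M := le_trans (norm_nonneg _) ha
  have e1 : ‖a‖ ^ 2 = a.re ^ 2 + a.im ^ 2 := by rw [Complex.sq_norm, Complex.normSq_apply]; ring
  have e2 : ‖b‖ ^ 2 = b.re ^ 2 + b.im ^ 2 := by rw [Complex.sq_norm, Complex.normSq_apply]; ring
  have e3 : (a * (starRingEnd ℂ) b).re = a.re * b.re + a.im * b.im := by simp
  rw [e3] at h
  have h4 : ‖a‖ ^ 2 ≤ M ^ 2 := pow_le_pow_left₀ (norm_nonneg _) ha 2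
  have key : (‖b‖ * a.re - M * b.re) ^ 2 + (‖b‖ * a.im - M * b.im) ^ 2 ≤ 0 := by
    have : (‖b‖ * a.re - M * b.re) ^ 2 + (‖b‖ * a.im - M * b.im) ^ 2
      = ‖b‖ ^ 2 * ‖a‖ ^ 2 - 2 * (M * ‖b‖) * (a.re * b.re + a.im * b.im) + M ^ 2 * ‖b‖ ^ 2 := by
      rw [e1]; linear_combination -M ^ 2 * e2
    rw [this]
    have k1 := mul_le_mul_of_nonneg_left h4 (sq_nonneg ‖b‖)
    have k2 := mul_le_mul_of_nonneg_left h (mul_nonneg hM (norm_nonneg b))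
    nlinarith
  have k1 : ‖b‖ * a.re - M * b.re = 0 := by
    apply pow_eq_zero_iff (two_ne_zero) |>.mp
    nlinarith [sq_nonneg (‖b‖ * a.re - M * b.re), sq_nonneg (‖b‖ * a.im - M * b.im)]
  have k2 : ‖b‖ * a.im - M * b.im = 0 := by
    apply pow_eq_zero_iff (two_ne_zero) |>.mp
    nlinarith [sq_nonneg (‖b‖ * a.re - M * b.re), sq_nonneg (‖b‖ * a.im - M * b.im)]
  apply Complex.ext
  · simp; linarith
  · simp; linarith

/-- Jensen for sine with equality case. -/
lemma aux_jensen {m : ℕ} (hm : 0 < m) (x : ℕ → ℝ) (h0 : ∀ k < m, 0 ≤ x k) (h1 : ∀ k < m, x k ≤ π)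
    (hs : ∑ k ∈ Finset.range m, x k = π / 2) :
    ∑ k ∈ Finset.range m, Real.sin (x k) ≤ m * Real.sin (π / (2 * m)) ∧
    (m * Real.sin (π / (2 * m)) ≤ ∑ k ∈ Finset.range m, Real.sin (x k) →
      ∀ k < m, x k = π / (2 * m)) := by
  have hm' : (0 : ℝ) < m := by exact_mod_cast hm
  have hw : ∀ i ∈ Finset.range m, (0:ℝ) < (fun _ : ℕ => (1 / m : ℝ)) i := by
    intro i _; positivity
  have hw1 : ∑ i ∈ Finset.range m, (fun _ : ℕ => (1 / m : ℝ)) i = 1 := by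
    simp; field_simp
  have hmem : ∀ i ∈ Finset.range m, x i ∈ Set.Icc 0 π := fun i hi =>
    ⟨h0 i (Finset.mem_range.mp hi), h1 i (Finset.mem_range.mp hi)⟩
  have hmean : ∑ i ∈ Finset.range m, (fun _ : ℕ => (1 / m : ℝ)) i • x i = π / (2 * m) := by
    simp only [smul_eq_mul, ← Finset.mul_sum, hs]; field_simp
  have hval : ∑ i ∈ Finset.range m, (fun _ : ℕ => (1 / m : ℝ)) i • Real.sin (x i)
      = (∑ k ∈ Finset.range m, Real.sin (x k)) / m := by
    simp only [smul_eq_mul, ← Finset.mul_sum]; field_simp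
  have hJ := strictConcaveOn_sin_Icc.concaveOn.le_map_sum (fun i hi => (hw i hi).le) hw1 hmem
  rw [hmean, hval, div_le_iff₀ hm'] at hJ
  refine ⟨by linarith, fun hge k hk => ?_⟩
  have hE := (strictConcaveOn_sin_Icc.map_sum_eq_iff hw hw1 hmem)
  rw [hmean, hval] at hE
  refine hE.mp ?_ k (Finset.mem_range.mpr hk)
  rw [eq_div_iff hm'.ne']
  linarith

/-- The sorted core estimate together with its equality case. -/
lemma aux_core {m : ℕ} (hm : 0 < m) (r φ : ℕ → ℝ) (w v : ℕ → ℂ) (M : ℝ)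
    (hmono : ∀ k < m, φ k ≤ φ (k + 1)) (hπ : ∀ k < m, φ (k + 1) ≤ φ k + π)
    (hlast : φ m = φ 0 + π)
    (hw : ∀ k < m, w k = r k * Complex.exp (φ k * Complex.I))
    (hv : ∀ k < m, v (k + 1) - v k = 2 * w k) (hvm : v m = - v 0)
    (hM : ∀ k ≤ m, ‖v k‖ ≤ M) :
    ∑ k ∈ Finset.range m, r k ≤ M * (m * Real.sin (π / (2 * m))) ∧
    (0 < M → M * (m * Real.sin (π / (2 * m))) ≤ ∑ k ∈ Finset.range m, r k →
      ∃ D : ℂ, D ≠ 0 ∧ ∀ k < m, w k = D * Complex.exp (π / m * Complex.I) ^ k) := by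
  have hm' : (0 : ℝ) < m := by exact_mod_cast hm
  have hM0 : 0 ≤ M := le_trans (norm_nonneg _) (hM 0 (Nat.zero_le _))
  set e : ℕ → ℂ := fun k => Complex.exp (φ k * Complex.I) with he
  have hnorm : ∀ k < m, ‖e k - e (k + 1)‖ = 2 * Real.sin ((φ (k + 1) - φ k) / 2) := fun k hk =>
    aux_norm_exp _ _ (hmono k hk) (hπ k hk)
  have hem : e m = - e 0 := by
    simp only [he, hlast]
    push_cast
    rw [add_mul, Complex.exp_add, Complex.exp_pi_mul_I]
    ring
  have hee : ∀ k, e k * (starRingEnd ℂ) (e k) = 1 := by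
    intro k
    rw [Complex.mul_conj, Complex.normSq_eq_norm_sq, Complex.norm_exp_ofReal_mul_I]
    simp
  have hterm : ∀ k ∈ Finset.range m, 2 * r k =
      (v (k + 1) * (starRingEnd ℂ) (e k - e (k + 1))).re
      + ((v (k + 1) * (starRingEnd ℂ) (e (k + 1))).re - (v k * (starRingEnd ℂ) (e k)).re) := by
    intro k hk
    rw [Finset.mem_range] at hk
    rw [← Complex.sub_re, ← Complex.add_re]
    have : v (k + 1) * (starRingEnd ℂ) (e k - e (k + 1)) +
        (v (k + 1) * (starRingEnd ℂ) (e (k + 1)) - v k * (starRingEnd ℂ) (e k)) = ((2 * r k : ℝ) : ℂ) := by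
      rw [map_sub]
      have h1 := hv k hk
      rw [hw k hk] at h1
      push_cast
      linear_combination (starRingEnd ℂ) (e k) * h1 + 2 * r k * hee k
    rw [this, Complex.ofReal_re]
  have hsum : 2 * ∑ k ∈ Finset.range m, r k =
      ∑ k ∈ Finset.range m, (v (k + 1) * (starRingEnd ℂ) (e k - e (k + 1))).re := by
    rw [Finset.mul_sum, Finset.sum_congr rfl hterm, Finset.sum_add_distrib,
      Finset.sum_range_sub (fun k => (v k * (starRingEnd ℂ) (e k)).re), hvm, hem]
    simp
  have hcs : ∀ k ∈ Finset.range m, (v (k + 1) * (starRingEnd ℂ) (e k - e (k + 1))).re ≤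
      M * (2 * Real.sin ((φ (k + 1) - φ k) / 2)) := by
    intro k hk
    rw [Finset.mem_range] at hk
    rw [← hnorm k hk]
    calc _ ≤ ‖v (k + 1) * (starRingEnd ℂ) (e k - e (k + 1))‖ := Complex.re_le_norm _
      _ = ‖v (k + 1)‖ * ‖e k - e (k + 1)‖ := by rw [norm_mul, RCLike.norm_conj]
      _ ≤ _ := mul_le_mul_of_nonneg_right (hM _ hk) (norm_nonneg _)
  have hsle := Finset.sum_le_sum hcs
  rw [← Finset.mul_sum, ← Finset.mul_sum] at hsle
  obtain ⟨hJ, hJe⟩ := aux_jensen hm (fun k => (φ (k + 1) - φ k) / 2)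
    (fun k hk => by have := hmono k hk; linarith)
    (fun k hk => by have := hπ k hk; have := Real.pi_pos; linarith)
    (by rw [← Finset.sum_div, Finset.sum_range_sub, hlast]; ring)
  have hJM := mul_le_mul_of_nonneg_left hJ hM0
  refine ⟨by linarith, fun hMpos hge => ?_⟩
  have hx := hJe (by
    have : M * (m * Real.sin (π / (2 * m))) ≤
      M * ∑ k ∈ Finset.range m, Real.sin ((φ (k + 1) - φ k) / 2) := by linarith
    exact le_of_mul_le_mul_left this hMpos)
  -- equality in every Cauchy–Schwarz term
  have heq : ∀ k ∈ Finset.range m, (v (k + 1) * (starRingEnd ℂ) (e k - e (k + 1))).re =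
      M * (2 * Real.sin ((φ (k + 1) - φ k) / 2)) := by
    refine (Finset.sum_eq_sum_iff_of_le hcs).mp ?_
    apply le_antisymm (Finset.sum_le_sum hcs)
    rw [← Finset.mul_sum, ← Finset.mul_sum, ← hsum]
    linarith
  set S : ℝ := Real.sin (π / (2 * m)) with hS
  have hm1 : (1 : ℝ) ≤ m := by exact_mod_cast hm
  have hSpos : 0 < S := by
    apply Real.sin_pos_of_pos_of_lt_pi (by positivity)
    rw [div_lt_iff₀ (by positivity)]
    nlinarith [Real.pi_pos]
  set ω : ℂ := Complex.exp (π / m * Complex.I) with hω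
  have hstep : ∀ k < m, e (k + 1) = e k * ω := by
    intro k hk
    have h1 := hx k hk
    have h2 : φ (k + 1) = φ k + π / m := by
      field_simp at h1 ⊢
      linarith
    simp only [he, hω, ← Complex.exp_add, h2]
    push_cast
    ring_nf
  have hpow : ∀ k ≤ m, e k = e 0 * ω ^ k := by
    intro k
    induction k with
    | zero => simp
    | succ k ih =>
      intro hk
      rw [hstep k hk, ih (by omega), pow_succ, mul_assoc]
  have hvk : ∀ k < m, (2 * S : ℂ) * v (k + 1) = M * (e k - e (k + 1)) := by
    intro k hk
    have h1 := heq k (Finset.mem_range.mpr hk)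
    have h2 := aux_inner_eq (hM (k + 1) hk) (by rw [h1, hnorm k hk])
    rw [hnorm k hk, hx k hk] at h2
    rw [← h2, hS, Complex.ofReal_mul]; simp
  have hωm : ω ^ m = -1 := by
    have h1 := hpow m le_rfl
    rw [hem] at h1
    have : e 0 ≠ 0 := Complex.exp_ne_zero _
    apply mul_left_cancel₀ this
    rw [← h1]; ring
  have hω0 : ω ≠ 0 := Complex.exp_ne_zero _
  have hω1 : ω - 1 ≠ 0 := by
    intro h
    have : ω = 1 := by linear_combination h
    rw [this] at hωm
    norm_num at hωm
  have hvk' : ∀ k ≤ m, (2 * S : ℂ) * v k * ω = M * (e k * (1 - ω)) := by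
    intro k hk
    rcases k with _ | k
    · have h1 := hvk (m - 1) (by omega)
      rw [Nat.sub_add_cancel hm, hvm, hem, hpow (m - 1) (by omega)] at h1
      have h2 : ω ^ (m - 1) * ω = -1 := by rw [← pow_succ, Nat.sub_add_cancel hm, hωm]
      linear_combination -ω * h1 - M * e 0 * h2
    · rw [hvk k hk, hstep k hk]; ring
  have hSc : (S : ℂ) ≠ 0 := by exact_mod_cast hSpos.ne'
  have hMc : (M : ℂ) ≠ 0 := by exact_mod_cast hMpos.ne'
  refine ⟨-(M * e 0 * (ω - 1) ^ 2) / (4 * S * ω), ?_, ?_⟩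
  · apply div_ne_zero
    · exact neg_ne_zero.mpr (mul_ne_zero (mul_ne_zero hMc (Complex.exp_ne_zero _)) (pow_ne_zero _ hω1))
    · exact mul_ne_zero (mul_ne_zero (by norm_num) hSc) hω0
  · intro k hk
    have h1 := hvk' k hk.le
    have h2 := hvk' (k + 1) hk
    rw [hstep k hk] at h2
    have h3 := hv k hk
    rw [div_mul_eq_mul_div, eq_div_iff (mul_ne_zero (mul_ne_zero (by norm_num) hSc) hω0)]
    have h4 := hpow k hk.le
    linear_combination h2 - h1 - 2 * S * ω * h3 - M * (ω - 1) ^ 2 * h4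

lemma aux_angle (z : ℂ) : ∃ (φ : ℝ) (σ : ℤˣ), 0 ≤ φ ∧ φ ≤ π ∧
    ((σ : ℤ) : ℂ) * z = ‖z‖ * Complex.exp (φ * Complex.I) := by
  rcases le_or_gt 0 z.arg with h | h
  · refine ⟨z.arg, 1, h, Complex.arg_le_pi z, ?_⟩
    rw [Complex.norm_mul_exp_arg_mul_I]; simp
  · refine ⟨z.arg + π, -1, by linarith [Complex.neg_pi_lt_arg z], by linarith, ?_⟩
    push_cast
    rw [add_mul, Complex.exp_add, Complex.exp_pi_mul_I]
    have := Complex.norm_mul_exp_arg_mul_I z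
    linear_combination this

lemma aux_unsorted {s m : ℕ} (hm : m = 2 ^ s) (z : Fin m → ℂ) (M : ℝ)
    (hM : ∀ ε : Fin m → ℤˣ, ‖∑ j, ((ε j : ℤ) : ℂ) * z j‖ ≤ M) :
    ∑ j, ‖z j‖ ≤ M * (m * Real.sin (π / (2 * m))) ∧
    (0 < ∑ j, ‖z j‖ → M * (m * Real.sin (π / (2 * m))) ≤ ∑ j, ‖z j‖ → ∑ j, z j ≠ 0) := by
  have hm0 : 0 < m := by rw [hm]; positivity
  choose φ σ h0 hpi hz using fun j => aux_angle (z j)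
  let τ : Equiv.Perm (Fin m) := Tuple.sort φ
  have hτ : Monotone (φ ∘ τ) := Tuple.monotone_sort φ
  let i0 : Fin m := ⟨0, hm0⟩
  let φ' : ℕ → ℝ := fun k => if h : k < m then φ (τ ⟨k, h⟩) else φ (τ i0) + π
  let r : ℕ → ℝ := fun k => if h : k < m then ‖z (τ ⟨k, h⟩)‖ else 0
  let sg : ℕ → ℤ := fun k => if h : k < m then (σ (τ ⟨k, h⟩) : ℤ) else 1
  let w : ℕ → ℂ := fun k => if h : k < m then ((σ (τ ⟨k, h⟩) : ℤ) : ℂ) * z (τ ⟨k, h⟩) else 0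
  let v : ℕ → ℂ := fun k => ∑ i ∈ Finset.range m, ((if i < k then (1 : ℤˣ) else -1 : ℤˣ) : ℤ) * w i
  have hφ' : ∀ k (h : k < m), φ' k = φ (τ ⟨k, h⟩) := fun k h => dif_pos h
  have hr : ∀ k (h : k < m), r k = ‖z (τ ⟨k, h⟩)‖ := fun k h => dif_pos h
  have hsg : ∀ k (h : k < m), sg k = (σ (τ ⟨k, h⟩) : ℤ) := fun k h => dif_pos h
  have hw : ∀ k (h : k < m), w k = ((σ (τ ⟨k, h⟩) : ℤ) : ℂ) * z (τ ⟨k, h⟩) := fun k h => dif_pos h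
  have hφm : φ' m = φ (τ i0) + π := dif_neg (lt_irrefl m)
  have hP : ∑ k ∈ Finset.range m, r k = ∑ j, ‖z j‖ := by
    rw [Finset.sum_range, ← Equiv.sum_comp τ (fun j => ‖z j‖)]
    exact Finset.sum_congr rfl fun i _ => hr i i.2
  have hmono : ∀ k < m, φ' k ≤ φ' (k + 1) ∧ φ' (k + 1) ≤ φ' k + π := by
    intro k hk
    rw [hφ' k hk]
    by_cases hk1 : k + 1 < m
    · rw [hφ' _ hk1]
      refine ⟨hτ (Fin.mk_le_mk.mpr (Nat.le_succ k)), ?_⟩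
      linarith [h0 (τ ⟨k, hk⟩), hpi (τ ⟨k + 1, hk1⟩)]
    · have : k + 1 = m := by omega
      rw [this, hφm]
      refine ⟨by linarith [h0 (τ i0), hpi (τ ⟨k, hk⟩)], ?_⟩
      have : φ (τ i0) ≤ φ (τ ⟨k, hk⟩) := hτ (Fin.mk_le_mk.mpr (Nat.zero_le k))
      linarith
  have hcore := aux_core hm0 r φ' w v M (fun k hk => (hmono k hk).1) (fun k hk => (hmono k hk).2)
    (by rw [hφm, hφ' 0 hm0]) (fun k hk => by rw [hw k hk, hr k hk, hφ' k hk, hz])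
    (fun k hk => by
      simp only [v, ← Finset.sum_sub_distrib]
      rw [Finset.sum_eq_single k]
      · simp; ring
      · intro b _ hb
        by_cases h : b < k
        · simp [h, Nat.lt_succ_of_lt h]
        · have : ¬ b < k + 1 := by omega
          simp [h, this]
      · intro h; exact absurd (Finset.mem_range.mpr hk) h)
    (by
      simp only [v, ← Finset.sum_neg_distrib]
      apply Finset.sum_congr rfl
      intro i hi
      simp [Finset.mem_range.mp hi])
    (fun k _ => by
      have := hM (fun j => (if ((τ.symm j : Fin m) : ℕ) < k then (1 : ℤˣ) else -1) * σ j)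
      convert this using 2
      simp only [v]
      rw [Finset.sum_range, ← Equiv.sum_comp τ (fun j =>
        ((((if ((τ.symm j : Fin m) : ℕ) < k then (1 : ℤˣ) else -1) * σ j : ℤˣ) : ℤ) : ℂ) * z j)]
      apply Finset.sum_congr rfl
      intro i _
      rw [hw i i.2]
      by_cases hik : (i : ℕ) < k <;> simp [hik])
  rw [hP] at hcore
  refine ⟨hcore.1, fun hpos hge hzero => ?_⟩
  have hMpos : 0 < M := by
    have hM0 : 0 ≤ M := le_trans (norm_nonneg _) (hM 1)
    rcases hM0.lt_or_eq with h | h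
    · exact h
    · have := hcore.1
      rw [← h] at this
      linarith
  obtain ⟨D, hD, hDw⟩ := hcore.2 hMpos hge
  have hprim : IsPrimitiveRoot (Complex.exp (π / m * Complex.I)) (2 ^ (s + 1)) := by
    have := Complex.isPrimitiveRoot_exp (2 ^ (s + 1)) (by positivity)
    convert this using 2
    rw [hm]
    push_cast
    field_simp
    ring
  apply aux_cyclo hprim sg
  · rw [hsg 0 hm0]; exact (σ _).ne_zero
  · rw [← hm]
    apply mul_left_cancel₀ hD
    rw [mul_zero, ← hzero, Finset.mul_sum, Finset.sum_range, ← Equiv.sum_comp τ z]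
    apply Finset.sum_congr rfl
    intro i _
    have h1 := hDw i i.2
    rw [hw i i.2] at h1
    rw [hsg i i.2]
    have h2 : ((σ (τ i) : ℤ) : ℂ) * ((σ (τ i) : ℤ) : ℂ) = 1 := by
      rw [← Int.cast_mul, ← Units.val_mul, Int.units_mul_self]; simp
    simp only [Fin.eta] at h1 ⊢
    linear_combination -((σ (τ i) : ℤ) : ℂ) * h1 + z (τ i) * h2

lemma aux_c {m : ℕ} (hm : 2 ≤ m) : 1 < m * Real.sin (π / (2 * m)) := by
  have hm' : (2 : ℝ) ≤ m := by exact_mod_cast hm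
  have h := Real.mul_lt_sin (x := π / (2 * m)) (by positivity) (by
    apply div_lt_div_of_pos_left Real.pi_pos (by norm_num); linarith)
  have h2 := mul_lt_mul_of_pos_left h (show (0 : ℝ) < m by linarith)
  have h3 : (m : ℝ) * (2 / π * (π / (2 * m))) = 1 := by
    have := Real.pi_pos
    field_simp
  linarith

/-- Uniform gap, by compactness. -/
lemma aux_gap {s m : ℕ} (hs : 2 ≤ s) (hm : m = 2 ^ s) : ∃ δ > 0, ∀ z : Fin m → ℂ, ∃ ε : Fin m → ℤˣ,
    1 / (m * Real.sin (π / (2 * m))) * ∑ j, ‖z j‖ + δ * ∑ j, ‖z j‖ ≤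
      ‖∑ j, ((ε j : ℤ) : ℂ) * z j‖ + (1 - 1 / (m * Real.sin (π / (2 * m)))) * ‖∑ j, z j‖ := by
  have hm2 : 2 ≤ m := by
    rw [hm]; calc 2 = 2 ^ 1 := rfl
      _ ≤ 2 ^ s := Nat.pow_le_pow_right (by norm_num) (by omega)
  have hT := aux_c hm2
  have hun := fun z M => aux_unsorted hm z M
  set T : ℝ := m * Real.sin (π / (2 * m)) with hTd
  have hc1 : 0 < 1 - 1 / T := by
    rw [sub_pos, div_lt_one (by linarith)]; exact hT
  let F : (Fin m → ℤˣ) → (Fin m → ℂ) → ℝ := fun ε z => ‖∑ j, ((ε j : ℤ) : ℂ) * z j‖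
  let Mx : (Fin m → ℂ) → ℝ := fun z => Finset.univ.sup' Finset.univ_nonempty (fun ε => F ε z)
  have hMc : Continuous Mx := Continuous.finset_sup'_apply _ fun ε _ => by
    simp only [F]; fun_prop
  have hle : ∀ z ε, F ε z ≤ Mx z := fun z ε =>
    Finset.le_sup' (fun ε => F ε z) (Finset.mem_univ ε)
  have hex : ∀ z, ∃ ε, Mx z = F ε z := fun z => by
    obtain ⟨ε, _, h⟩ := Finset.exists_mem_eq_sup' Finset.univ_nonempty (fun ε => F ε z)
    exact ⟨ε, h⟩
  let g : (Fin m → ℂ) → ℝ := fun z => Mx z + (1 - 1 / T) * ‖∑ j, z j‖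
  have hgc : Continuous g := by
    simp only [g]; fun_prop
  let K : Set (Fin m → ℂ) := {z | ∑ j, ‖z j‖ = 1}
  have hK : IsCompact K := by
    apply Metric.isCompact_of_isClosed_isBounded
    · exact isClosed_eq (by fun_prop) continuous_const
    · apply Metric.isBounded_closedBall (x := (0 : Fin m → ℂ)) (r := 1) |>.subset
      intro z hz
      rw [mem_closedBall_zero_iff, pi_norm_le_iff_of_nonneg zero_le_one]
      intro i
      rw [← show ∑ j, ‖z j‖ = 1 from hz]
      exact Finset.single_le_sum (f := fun j => ‖z j‖) (fun _ _ => norm_nonneg _) (Finset.mem_univ i)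
  have hKn : K.Nonempty := by
    refine ⟨Pi.single ⟨0, by omega⟩ 1, ?_⟩
    change ∑ j, _ = _
    rw [Finset.sum_eq_single ⟨0, by omega⟩]
    · simp
    · intro b _ hb; simp [hb]
    · simp
  have hpos : ∀ z ∈ K, 1 / T < g z := by
    intro z hz
    have hz1 : ∑ j, ‖z j‖ = 1 := hz
    obtain ⟨h1, h2⟩ := hun z (Mx z) (hle z)
    rw [hz1] at h1 h2
    have h3 : 1 / T ≤ Mx z := by rw [div_le_iff₀ (by linarith)]; exact h1
    rcases h3.lt_or_eq with h4 | h4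
    · have := mul_nonneg hc1.le (norm_nonneg (∑ j, z j))
      simp only [g]; linarith
    · have h5 : ∑ j, z j ≠ 0 := h2 one_pos (by
        rw [← h4, one_div, inv_mul_cancel₀ (by linarith)])
      have := mul_pos hc1 (norm_pos_iff.mpr h5)
      simp only [g]; linarith
  obtain ⟨z0, hz0, hmin⟩ := hK.exists_isMinOn hKn hgc.continuousOn
  refine ⟨g z0 - 1 / T, sub_pos.mpr (hpos z0 hz0), fun z => ?_⟩
  set P := ∑ j, ‖z j‖ with hP
  have hP0 : 0 ≤ P := Finset.sum_nonneg fun _ _ => norm_nonneg _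
  rcases hP0.lt_or_eq with hPp | hPz
  · let z' : Fin m → ℂ := fun j => ((1 / P : ℝ) : ℂ) * z j
    have hz' : z' ∈ K := by
      change ∑ j, ‖((1 / P : ℝ) : ℂ) * z j‖ = 1
      simp only [norm_mul, ← Finset.mul_sum, Complex.norm_real, ← hP]
      rw [Real.norm_of_nonneg (by positivity)]
      field_simp
    have h1 : g z0 ≤ g z' := hmin hz'
    obtain ⟨ε, hε⟩ := hex z'
    refine ⟨ε, ?_⟩
    have h2 : F ε z' = 1 / P * ‖∑ j, ((ε j : ℤ) : ℂ) * z j‖ := by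
      have : ∑ j, ((ε j : ℤ) : ℂ) * z' j = ((1 / P : ℝ) : ℂ) * ∑ j, ((ε j : ℤ) : ℂ) * z j := by
        rw [Finset.mul_sum]; exact Finset.sum_congr rfl fun j _ => by simp only [z']; ring
      simp only [F]
      rw [this, norm_mul, Complex.norm_real, Real.norm_of_nonneg (by positivity)]
    have h3 : ‖∑ j, z' j‖ = 1 / P * ‖∑ j, z j‖ := by
      simp only [z']
      rw [← Finset.mul_sum, norm_mul, Complex.norm_real, Real.norm_of_nonneg (by positivity)]
    have h4 : g z' = 1 / P * (‖∑ j, ((ε j : ℤ) : ℂ) * z j‖ + (1 - 1 / T) * ‖∑ j, z j‖) := by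
      simp only [g]; rw [hε, h2, h3]; ring
    rw [h4, one_div_mul_eq_div, le_div_iff₀ hPp] at h1
    linarith
  · refine ⟨1, ?_⟩
    rw [← hPz]
    have := mul_nonneg hc1.le (norm_nonneg (∑ j, z j))
    have := norm_nonneg (∑ j, (((1 : Fin m → ℤˣ) j : ℤ) : ℂ) * z j)
    linarith

/-- The complex square of a vector. -/
def auxZ (v : E2) : ℂ := ((⟨v 0, v 1⟩ : ℂ)) ^ 2

lemma aux_inner (a x : E2) : ⟪a, x⟫ = a 0 * x 0 + a 1 * x 1 := by
  simp [PiLp.inner_apply, Fin.sum_univ_two]; ring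

lemma aux_norm_sq (a : E2) : ‖a‖ ^ 2 = a 0 ^ 2 + a 1 ^ 2 := by
  simp [EuclideanSpace.norm_sq_eq, Fin.sum_univ_two]

lemma aux_normZ (a : E2) : ‖auxZ a‖ = a 0 ^ 2 + a 1 ^ 2 := by
  rw [auxZ, norm_pow, Complex.sq_norm, Complex.normSq_apply]; ring

lemma aux_vec0 (x y : ℝ) : vec2 x y 0 = x := rfl
lemma aux_vec1 (x y : ℝ) : vec2 x y 1 = y := rfl

lemma aux_sqrt (V : ℂ) : ∃ p q : ℝ, p ^ 2 + q ^ 2 = 1 ∧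
    (p ^ 2 - q ^ 2) * V.re + 2 * p * q * V.im = ‖V‖ := by
  refine ⟨Real.cos (V.arg / 2), Real.sin (V.arg / 2), by rw [add_comm]; exact Real.sin_sq_add_cos_sq _, ?_⟩
  have hc : Real.cos V.arg = Real.cos (V.arg / 2) ^ 2 - Real.sin (V.arg / 2) ^ 2 := by
    rw [← Real.cos_two_mul']; ring_nf
  have hsn : Real.sin V.arg = 2 * Real.sin (V.arg / 2) * Real.cos (V.arg / 2) := by
    rw [← Real.sin_two_mul]; ring_nf
  have h1 : ‖V‖ * Real.cos V.arg = V.re := Complex.norm_mul_cos_arg V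
  have h2 : ‖V‖ * Real.sin V.arg = V.im := Complex.norm_mul_sin_arg V
  have h3 := Real.sin_sq_add_cos_sq V.arg
  have h4 : 2 * Real.cos (V.arg / 2) * Real.sin (V.arg / 2) = Real.sin V.arg := by rw [hsn]; ring
  rw [← hc, h4, ← h1, ← h2]
  linear_combination ‖V‖ * h3

lemma aux_phi_sq {m : ℕ} (a : Fin m → E2) (x y : E2) :
    ‖PhiMap a x - PhiMap a y‖ ^ 2 = ∑ j, (|⟪a j, x⟫| - |⟪a j, y⟫|) ^ 2 := by
  simp [EuclideanSpace.norm_sq_eq, PhiMap]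

lemma aux_pdist_nonneg (x y : E2) : 0 ≤ pdist x y := le_min (norm_nonneg _) (norm_nonneg _)

lemma aux_ratio_nonneg {m : ℕ} (a : Fin m → E2) : ∀ r ∈ ratioSet a, 0 ≤ r := by
  rintro r ⟨x, y, _, rfl⟩
  exact div_nonneg (norm_nonneg _) (aux_pdist_nonneg x y)

lemma aux_diff_le (a x y : E2) : (|⟪a, x⟫| - |⟪a, y⟫|) ^ 2 ≤ ⟪a, x - y⟫ ^ 2 ∧
    (|⟪a, x⟫| - |⟪a, y⟫|) ^ 2 ≤ ⟪a, x + y⟫ ^ 2 := by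
  rw [inner_sub_right, inner_add_right]
  constructor
  · exact sq_le_sq.mpr (abs_abs_sub_abs_le_abs_sub _ _)
  · have := abs_abs_sub_abs_le_abs_sub ⟪a, x⟫ (-⟪a, y⟫)
    rw [abs_neg, sub_neg_eq_add] at this
    exact sq_le_sq.mpr this

lemma aux_bdd {m : ℕ} (a : Fin m → E2) : BddAbove (ratioSet a) := by
  refine ⟨Real.sqrt (∑ j, ‖a j‖ ^ 2), ?_⟩
  rintro r ⟨x, y, h, rfl⟩
  have hp := (aux_pdist_nonneg x y).lt_of_ne' h
  rw [div_le_iff₀ hp]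
  apply le_of_sq_le_sq _ (by positivity)
  rw [mul_pow, Real.sq_sqrt (by positivity), aux_phi_sq, Finset.sum_mul]
  apply Finset.sum_le_sum
  intro j _
  have cs : ∀ u : E2, ⟪a j, u⟫ ^ 2 ≤ ‖a j‖ ^ 2 * ‖u‖ ^ 2 := fun u => by
    rw [← mul_pow, ← sq_abs]
    exact pow_le_pow_left₀ (abs_nonneg _) (abs_real_inner_le_norm _ _) 2
  rcases min_choice ‖x - y‖ ‖x + y‖ with h1 | h1
  · rw [pdist, h1]; exact (aux_diff_le (a j) x y).1.trans (cs _)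
  · rw [pdist, h1]; exact (aux_diff_le (a j) x y).2.trans (cs _)

lemma aux_L {m : ℕ} (a : Fin m → E2) (ε : Fin m → ℤˣ) :
    lipL a ^ 2 ≤ (∑ j, ‖auxZ (a j)‖ - ‖∑ j, ((ε j : ℤ) : ℂ) * auxZ (a j)‖) / 2 := by
  obtain ⟨p, q, hpq, hV⟩ := aux_sqrt (∑ j, ((ε j : ℤ) : ℂ) * auxZ (a j))
  -- x + y = (p, q), x - y = (-q, p)
  set x : E2 := vec2 ((p - q) / 2) ((q + p) / 2) with hx
  set y : E2 := vec2 ((p + q) / 2) ((q - p) / 2) with hy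
  have e1 : ‖x - y‖ = 1 := by
    have : ‖x - y‖ ^ 2 = 1 := by
      rw [aux_norm_sq]; simp only [PiLp.sub_apply, hx, hy, aux_vec0, aux_vec1]
      linear_combination hpq
    nlinarith [norm_nonneg (x - y)]
  have e2 : ‖x + y‖ = 1 := by
    have : ‖x + y‖ ^ 2 = 1 := by
      rw [aux_norm_sq]; simp only [PiLp.add_apply, hx, hy, aux_vec0, aux_vec1]
      linear_combination hpq
    nlinarith [norm_nonneg (x + y)]
  have hd : pdist x y = 1 := by rw [pdist, e1, e2, min_self]
  have hmem : ‖PhiMap a x - PhiMap a y‖ ∈ ratioSet a := ⟨x, y, by rw [hd]; exact one_ne_zero, by rw [hd, div_one]⟩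
  have hL : lipL a ≤ ‖PhiMap a x - PhiMap a y‖ := csInf_le ⟨0, aux_ratio_nonneg a⟩ hmem
  have hL0 : 0 ≤ lipL a := Real.sInf_nonneg (aux_ratio_nonneg a)
  refine (pow_le_pow_left₀ hL0 hL 2).trans ?_
  rw [aux_phi_sq, ← hV, Complex.re_sum, Complex.im_sum, Finset.mul_sum, Finset.mul_sum,
    ← Finset.sum_add_distrib, ← Finset.sum_sub_distrib, Finset.sum_div]
  apply Finset.sum_le_sum
  intro j _
  obtain ⟨h1, h2⟩ := aux_diff_le (a j) x y
  rw [aux_inner (a j) (x - y)] at h1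
  rw [aux_inner (a j) (x + y)] at h2
  simp only [PiLp.sub_apply, PiLp.add_apply, hx, hy, aux_vec0, aux_vec1] at h1 h2
  have hzre : (auxZ (a j)).re = a j 0 ^ 2 - a j 1 ^ 2 := by
    simp [auxZ, pow_two]
  have hzim : (auxZ (a j)).im = 2 * a j 0 * a j 1 := by
    simp [auxZ, pow_two]; ring
  rw [aux_normZ]
  rcases Int.units_eq_one_or (ε j) with h | h
  · rw [h]
    simp only [Units.val_one, Int.cast_one, one_mul, hzre, hzim]
    refine h1.trans (le_of_eq ?_)
    linear_combination (a j 0 ^ 2 + a j 1 ^ 2) / 2 * hpq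
  · rw [h]
    simp only [Units.val_neg, Units.val_one, Int.cast_neg, Int.cast_one, neg_mul, one_mul,
      Complex.neg_re, Complex.neg_im, hzre, hzim]
    refine h2.trans (le_of_eq ?_)
    linear_combination (a j 0 ^ 2 + a j 1 ^ 2) / 2 * hpq

lemma aux_U {m : ℕ} (a : Fin m → E2) :
    (∑ j, ‖auxZ (a j)‖ + ‖∑ j, auxZ (a j)‖) / 2 ≤ lipU a ^ 2 := by
  obtain ⟨p, q, hpq, hV⟩ := aux_sqrt (∑ j, auxZ (a j))
  set x : E2 := vec2 p q with hx
  have e1 : ‖x‖ = 1 := by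
    have : ‖x‖ ^ 2 = 1 := by
      rw [aux_norm_sq]; simp only [hx, aux_vec0, aux_vec1]
      exact hpq
    nlinarith [norm_nonneg x]
  have hd : pdist x 0 = 1 := by rw [pdist, sub_zero, add_zero, e1, min_self]
  have hmem : ‖PhiMap a x - PhiMap a 0‖ ∈ ratioSet a := ⟨x, 0, by rw [hd]; exact one_ne_zero, by rw [hd, div_one]⟩
  have hU : ‖PhiMap a x - PhiMap a 0‖ ≤ lipU a := le_csSup (aux_bdd a) hmem
  refine le_trans (le_of_eq ?_) (pow_le_pow_left₀ (norm_nonneg _) hU 2)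
  rw [aux_phi_sq, ← hV, Complex.re_sum, Complex.im_sum, Finset.mul_sum, Finset.mul_sum,
    ← Finset.sum_add_distrib, ← Finset.sum_add_distrib, Finset.sum_div]
  apply Finset.sum_congr rfl
  intro j _
  have hzre : (auxZ (a j)).re = a j 0 ^ 2 - a j 1 ^ 2 := by
    simp [auxZ, pow_two]
  have hzim : (auxZ (a j)).im = 2 * a j 0 * a j 1 := by
    simp [auxZ, pow_two]; ring
  rw [aux_normZ, hzre, hzim, inner_zero_right, abs_zero, sub_zero, sq_abs, aux_inner]
  simp only [hx, aux_vec0, aux_vec1]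
  linear_combination -(a j 0 ^ 2 + a j 1 ^ 2) / 2 * hpq

lemma aux_cond {m : ℕ} (a : Fin m → E2) (b : ℝ) (hb : 0 < b) (h : lipL a ^ 2 ≤ b * lipU a ^ 2) :
    ENNReal.ofReal b ^ (-(1 / 2) : ℝ) ≤ condNum a := by
  unfold condNum
  split_ifs with h0
  · exact le_top
  · have hL : 0 < lipL a := (Real.sInf_nonneg (aux_ratio_nonneg a)).lt_of_ne' h0
    have hU : 0 ≤ lipU a := Real.sSup_nonneg (aux_ratio_nonneg a)
    rw [ENNReal.ofReal_rpow_of_pos hb]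
    apply ENNReal.ofReal_le_ofReal
    rw [Real.rpow_neg hb.le, ← Real.sqrt_eq_rpow, inv_le_iff_one_le_mul₀ (Real.sqrt_pos.mpr hb),
      div_mul_eq_mul_div, one_le_div hL]
    apply le_of_sq_le_sq _ (by positivity)
    rw [mul_pow, Real.sq_sqrt hb.le]
    linarith

lemma aux_main {s : ℕ} (hs : 2 ≤ s) {m : ℕ} (hm : m = 2 ^ s) :
    ENNReal.ofReal (1 - 1 / (m * Real.sin (π / (2 * m)))) ^ (-(1 / 2) : ℝ) <
      ⨅ A : Fin m → E2, condNum A := by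
  obtain ⟨δ, hδ, hgap⟩ := aux_gap hs hm
  have hm2 : 2 ≤ m := by
    rw [hm]; calc 2 = 2 ^ 1 := rfl
      _ ≤ 2 ^ s := Nat.pow_le_pow_right (by norm_num) (by omega)
  have hT := aux_c hm2
  set T : ℝ := m * Real.sin (π / (2 * m)) with hTd
  have hc1 : 0 < 1 - 1 / T := by
    rw [sub_pos, div_lt_one (by linarith)]; exact hT
  set c := 1 / T with hc
  set d := min δ (1 - c) / 2 with hd
  have hd0 : 0 < d := by rw [hd]; exact half_pos (lt_min hδ hc1)
  have hd1 : 2 * d ≤ δ := by rw [hd]; linarith [min_le_left δ (1 - c)]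
  have hd2 : 0 < 1 - c - d := by rw [hd]; linarith [min_le_right δ (1 - c)]
  have hstrict : ENNReal.ofReal (1 - c) ^ (-(1 / 2) : ℝ) < ENNReal.ofReal (1 - c - d) ^ (-(1 / 2) : ℝ) := by
    rw [ENNReal.ofReal_rpow_of_pos hc1, ENNReal.ofReal_rpow_of_pos hd2]
    rw [ENNReal.ofReal_lt_ofReal_iff (Real.rpow_pos_of_pos hd2 _)]
    exact Real.rpow_lt_rpow_of_neg hd2 (by linarith) (by norm_num)
  refine hstrict.trans_le (le_iInf fun A => aux_cond A _ hd2 ?_)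
  obtain ⟨ε, hε⟩ := hgap (fun j => auxZ (A j))
  have hL := aux_L A ε
  have hU := aux_U A
  have htri : ‖∑ j, auxZ (A j)‖ ≤ ∑ j, ‖auxZ (A j)‖ := norm_sum_le _ _
  have hP : 0 ≤ ∑ j, ‖auxZ (A j)‖ := Finset.sum_nonneg fun _ _ => norm_nonneg _
  have k1 := mul_le_mul_of_nonneg_left hU hd2.le
  have k2 := mul_le_mul_of_nonneg_left htri hd0.le
  have k3 := mul_le_mul_of_nonneg_right hd1 hP
  nlinarith

/-- If `m = 2^s` with `s ≥ 2`, then every `A ∈ ℝ^{m×2}` has condition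
number strictly greater than `(1 − 1/(m·sin(π/(2m))))^{−1/2}`; in particular the minimal
condition number is strictly greater than this bound. -/
theorem stmt8 {s : ℕ} (hs : 2 ≤ s) {m : ℕ} (hm : m = 2 ^ s) :
    (∀ A : Fin m → E2,
      ENNReal.ofReal (1 - 1 / (m * Real.sin (π / (2 * m)))) ^ (-(1 / 2) : ℝ) < condNum A) ∧
    ENNReal.ofReal (1 - 1 / (m * Real.sin (π / (2 * m)))) ^ (-(1 / 2) : ℝ) <
      ⨅ A : Fin m → E2, condNum A := by
  exact ⟨fun A => (aux_main hs hm).trans_le (iInf_le _ A), aux_main hs hm⟩
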